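/- arXiv:2012.04300 — 9 statements merged into one kernel-verified Lean document; each statement's English description precedes it below -/
import Mathlib

section
/- Double recursion theorem: for every partial combinatory algebra A there exist elements g, h ∈ A such that for all a, b, c ∈ A: gab is defined, hab is defined, gabc ≃ a(hab)c, and habc ≃ b(gab)c. -/
universe u

/-- A partial combinatory algebra: a set with at least two elements, a partial
binary application, and combinators `k`, `s` with `ka↓`, `sa↓`, `sab↓`,
`kab ≃ a` and `sabc ≃ ac(bc)`. -/
structure PCA (A : Type u) where
  app : A → A → Part A
  k : A
  s : A
  nontrivial : ∃ a b : A, a ≠ b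
  k_def : ∀ a : A, (app k a).Dom
  s_def : ∀ a : A, (app s a).Dom
  s_app_def : ∀ a b : A, ((app s a).bind fun x => app x b).Dom
  k_spec : ∀ a b : A, ((app k a).bind fun x => app x b) = Part.some a
  s_spec : ∀ a b c : A,
    (((app s a).bind fun x => app x b).bind fun x => app x c)
      = (app a c).bind fun u => (app b c).bind fun v => app u v

namespace PCA
variable {A : Type u} (P : PCA A)

/-- Apply a possibly undefined value to an element of `A` (left association). -/
def apl (x : Part A) (b : A) : Part A := x.bind fun a => P.app a b

end PCA

namespace PCA
inductive Tm (A : Type u) : Type u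
  | var : ℕ → Tm A
  | con : A → Tm A
  | ap : Tm A → Tm A → Tm A

def ext {A : Type u} (a : A) (r : ℕ → A) : ℕ → A
  | 0 => a
  | n + 1 => r n

def ev {A : Type u} (P : PCA A) (r : ℕ → A) : Tm A → Part A
  | .var n => Part.some (r n)
  | .con a => Part.some a
  | .ap t u => (ev P r t).bind fun x => (ev P r u).bind fun y => P.app x y

def lam {A : Type u} (P : PCA A) : Tm A → Tm A
  | .var 0 => .ap (.ap (.con P.s) (.con P.k)) (.con P.k)
  | .var (n + 1) => .ap (.con P.k) (.var n)
  | .con a => .ap (.con P.k) (.con a)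
  | .ap t u => .ap (.ap (.con P.s) (lam P t)) (lam P u)

theorem k_ex {A : Type u} (P : PCA A) (a : A) :
    ∃ v, P.app P.k a = Part.some v ∧ ∀ b, P.app v b = Part.some a := by
  obtain ⟨v, hv⟩ := Part.dom_iff_mem.1 (P.k_def a)
  rw [← Part.eq_some_iff] at hv
  refine ⟨v, hv, fun b => ?_⟩
  have := P.k_spec a b
  rwa [hv, Part.bind_some] at this

theorem s_ex {A : Type u} (P : PCA A) (a b : A) :
    ∃ v, ((P.app P.s a).bind fun x => P.app x b) = Part.some v ∧
      ∀ c, P.app v c = (P.app a c).bind fun u => (P.app b c).bind fun v => P.app u v := by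
  obtain ⟨v, hv⟩ := Part.dom_iff_mem.1 (P.s_app_def a b)
  rw [← Part.eq_some_iff] at hv
  refine ⟨v, hv, fun c => ?_⟩
  have := P.s_spec a b c
  rwa [hv, Part.bind_some] at this

theorem lam_spec {A : Type u} (P : PCA A) (r : ℕ → A) (t : Tm A) :
    ∃ v, ev P r (lam P t) = Part.some v ∧ ∀ a, P.app v a = ev P (ext a r) t := by
  induction t with
  | var n =>
    cases n with
    | zero =>
      obtain ⟨v, hv, h⟩ := s_ex P P.k P.k
      refine ⟨v, by simpa [lam, ev] using hv, fun a => ?_⟩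
      obtain ⟨w, hw, h'⟩ := k_ex P a
      rw [h, hw]
      simp [h', ev, ext]
    | succ n =>
      obtain ⟨v, hv, h⟩ := k_ex P (r n)
      exact ⟨v, by simpa [lam, ev] using hv, fun a => by simp [h, ev, ext]⟩
  | con a =>
    obtain ⟨v, hv, h⟩ := k_ex P a
    exact ⟨v, by simpa [lam, ev] using hv, fun a => by simp [h, ev]⟩
  | ap t u iht ihu =>
    obtain ⟨x, hx, h1⟩ := iht
    obtain ⟨y, hy, h2⟩ := ihu
    obtain ⟨v, hv, h⟩ := s_ex P x y
    exact ⟨v, by simpa [lam, ev, hx, hy] using hv, fun a => by simp [h, ev, h1, h2]⟩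

theorem five {A : Type u} (P : PCA A) (t : Tm A) :
    ∃ v, ∀ x y, ∃ p, P.apl (P.app v x) y = Part.some p ∧
      ∀ a b, ∃ q, P.apl (P.app p a) b = Part.some q ∧
        ∀ c, P.app q c =
          ev P (ext c (ext b (ext a (ext y (ext x fun _ => P.k))))) t := by
  obtain ⟨v, -, h⟩ := lam_spec P (fun _ => P.k) (lam P (lam P (lam P (lam P t))))
  refine ⟨v, fun x y => ?_⟩
  obtain ⟨v1, e1, h1⟩ := lam_spec P (ext x fun _ => P.k) (lam P (lam P (lam P t)))
  obtain ⟨p, e2, h2⟩ := lam_spec P (ext y (ext x fun _ => P.k)) (lam P (lam P t))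
  refine ⟨p, by simp [apl, h, e1, h1, e2], fun a b => ?_⟩
  obtain ⟨v3, e3, h3⟩ := lam_spec P (ext a (ext y (ext x fun _ => P.k))) (lam P t)
  obtain ⟨q, e4, h4⟩ := lam_spec P (ext b (ext a (ext y (ext x fun _ => P.k)))) t
  exact ⟨q, by simp [apl, h2, e3, h3, e4], h4⟩

end PCA

/-- **The double recursion theorem**: there are `g, h ∈ A` such that for all
`a, b, c ∈ A`: `gab↓`, `hab↓`, `gabc ≃ a(hab)c` and `habc ≃ b(gab)c`. -/
theorem double_recursion_theorem {A : Type u} (P : PCA A) :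
    ∃ g h : A, ∀ a b c : A,
      (P.apl (P.app g a) b).Dom ∧
      (P.apl (P.app h a) b).Dom ∧
      P.apl (P.apl (P.app g a) b) c
        = P.apl ((P.apl (P.app h a) b).bind fun hab => P.app a hab) c ∧
      P.apl (P.apl (P.app h a) b) c
        = P.apl ((P.apl (P.app g a) b).bind fun gab => P.app b gab) c := by
  classical
  -- body with variables c = 0, b = 1, a = 2, y = 3, x = 4
  obtain ⟨G, hG⟩ := PCA.five P (.ap (.ap (.var 2)
    (.ap (.ap (.ap (.ap (.var 3) (.var 4)) (.var 3)) (.var 2)) (.var 1))) (.var 0))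
  obtain ⟨H, hH⟩ := PCA.five P (.ap (.ap (.var 1)
    (.ap (.ap (.ap (.ap (.var 4) (.var 4)) (.var 3)) (.var 2)) (.var 1))) (.var 0))
  obtain ⟨g, eg, hg⟩ := hG G H
  obtain ⟨h, eh, hh⟩ := hH G H
  refine ⟨g, h, fun a b c => ?_⟩
  obtain ⟨gab, eg', hg'⟩ := hg a b
  obtain ⟨hab, eh', hh'⟩ := hh a b
  refine ⟨by rw [eg']; trivial, by rw [eh']; trivial, ?_, ?_⟩
  · rw [eg', eh']
    simp only [PCA.apl] at eh eh' ⊢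
    simp [hg', PCA.ev, PCA.ext, eh, eh']
  · rw [eg', eh']
    simp only [PCA.apl] at eg eg' ⊢
    simp [hh', PCA.ev, PCA.ext, eg, eg']
end

section
/- Let A be a pca over ω. Then there exists a primitive recursion operator r ∈ A such that for all a, b ∈ A and all n ∈ ℕ: ra and rab are defined, rab0̄ ≃ a, and rab(n+1)‾ ≃ b(rabn̄)n̄. -/
universe u

/-- A pca over ω: a pca with successor, predecessor and definition-by-cases
combinators for a system of numerals `n ↦ n̄`. -/
structure PCAOmega (A : Type u) extends PCA A where
  succ : A
  pred : A
  d : A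
  num : ℕ → A
  succ_spec : ∀ n : ℕ, app succ (num n) = Part.some (num (n + 1))
  pred_spec : ∀ n : ℕ, app pred (num (n + 1)) = Part.some (num n)
  d_eq : ∀ (n : ℕ) (a b : A),
    toPCA.apl (toPCA.apl (toPCA.apl (app d (num n)) (num n)) a) b = Part.some a
  d_ne : ∀ (n m : ℕ) (a b : A), n ≠ m →
    toPCA.apl (toPCA.apl (toPCA.apl (app d (num n)) (num m)) a) b = Part.some b

/-- Terms over `A` with de Bruijn variables. -/
inductive PTm (A : Type u) where
  | var : ℕ → PTm A
  | c : A → PTm A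
  | ap : PTm A → PTm A → PTm A

namespace PTm
variable {A : Type u} (P : PCA A)

def cons (a : A) (ρ : ℕ → A) : ℕ → A
  | 0 => a
  | n + 1 => ρ n

def eval (ρ : ℕ → A) : PTm A → Part A
  | var n => Part.some (ρ n)
  | c a => Part.some a
  | ap t u => (eval ρ t).bind fun x => (eval ρ u).bind fun y => P.app x y

def lam : PTm A → PTm A
  | var 0 => ap (ap (c P.s) (c P.k)) (c P.k)
  | var (n + 1) => ap (c P.k) (var n)
  | c a => ap (c P.k) (c a)
  | ap t u => ap (ap (c P.s) (lam t)) (lam u)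

theorem ex_some {x : Part A} (h : x.Dom) : ∃ a, x = Part.some a :=
  ⟨x.get h, (Part.some_get h).symm⟩

theorem lam_spec (t : PTm A) (ρ : ℕ → A) :
    ∃ f, eval P ρ (lam P t) = Part.some f ∧ ∀ a, P.app f a = eval P (cons a ρ) t := by
  have hk : ∀ x, ∃ f, P.app P.k x = Part.some f ∧ ∀ a, P.app f a = Part.some x := by
    intro x
    obtain ⟨f, hf⟩ := ex_some (P.k_def x)
    refine ⟨f, hf, fun a => ?_⟩
    have := P.k_spec x a
    simpa [hf] using this
  have hs : ∀ x y, ∃ f, ((P.app P.s x).bind fun g => P.app g y) = Part.some f ∧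
      ∀ a, P.app f a = (P.app x a).bind fun u => (P.app y a).bind fun v => P.app u v := by
    intro x y
    obtain ⟨f, hf⟩ := ex_some (P.s_app_def x y)
    refine ⟨f, hf, fun a => ?_⟩
    have := P.s_spec x y a
    rw [hf] at this
    simpa using this
  induction t with
  | var n =>
    cases n with
    | zero =>
      obtain ⟨f, hf, h⟩ := hs P.k P.k
      refine ⟨f, by simpa [lam, eval] using hf, fun a => ?_⟩
      obtain ⟨g, hg, h'⟩ := hk a
      rw [h, hg]
      simp [h', eval, cons]
    | succ n =>
      obtain ⟨f, hf, h⟩ := hk (ρ n)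
      exact ⟨f, by simpa [lam, eval] using hf, fun a => by simp [h, eval, cons]⟩
  | c x =>
    obtain ⟨f, hf, h⟩ := hk x
    exact ⟨f, by simpa [lam, eval] using hf, fun a => by simp [h, eval]⟩
  | ap t u iht ihu =>
    obtain ⟨x, hx, hx'⟩ := iht
    obtain ⟨y, hy, hy'⟩ := ihu
    obtain ⟨f, hf, h⟩ := hs x y
    exact ⟨f, by simpa [lam, eval, hx, hy] using hf, fun a => by simp [h, eval, hx', hy']⟩

/-- The body of the recursor. -/
def recThen : PTm A := var 3

def recElse (pr : A) : PTm A :=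
  ap (ap (var 2) (ap (ap (ap (ap (var 4) (var 4)) (var 3)) (var 2)) (ap (c pr) (var 1))))
    (ap (c pr) (var 1))

def recBody (d z pr : A) : PTm A :=
  ap (ap (ap (ap (ap (c d) (c z)) (var 0)) (lam P recThen)) (lam P (recElse pr))) (c P.k)

end PTm


/-- Every pca over ω has a **primitive recursion operator** `r`: for all
`a, b ∈ A` and `n ∈ ℕ`, `ra↓`, `rab↓`, `rab0̄ ≃ a` and
`rab(n+1)‾ ≃ b(rabn̄)n̄`. -/
theorem primitive_recursion_operator {A : Type u} (P : PCAOmega A) :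
    ∃ r : A, ∀ (a b : A) (n : ℕ),
      (P.app r a).Dom ∧
      (P.toPCA.apl (P.app r a) b).Dom ∧
      P.toPCA.apl (P.toPCA.apl (P.app r a) b) (P.num 0) = Part.some a ∧
      P.toPCA.apl (P.toPCA.apl (P.app r a) b) (P.num (n + 1))
        = P.toPCA.apl
            ((P.toPCA.apl (P.toPCA.apl (P.app r a) b) (P.num n)).bind fun v => P.app b v)
            (P.num n) := by
  obtain ⟨w, -, hw⟩ := PTm.lam_spec P.toPCA
    (PTm.lam P.toPCA (PTm.lam P.toPCA (PTm.lam P.toPCA (PTm.recBody P.toPCA P.d (P.num 0) P.pred))))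
    (fun _ => P.k)
  obtain ⟨r, hr, hr'⟩ := PTm.lam_spec P.toPCA
    (PTm.lam P.toPCA (PTm.lam P.toPCA (PTm.recBody P.toPCA P.d (P.num 0) P.pred)))
    (PTm.cons w fun _ => P.k)
  have hww : P.app w w = Part.some r := by rw [hw, hr]
  refine ⟨r, fun a b n => ?_⟩
  obtain ⟨f, hf, hf'⟩ := PTm.lam_spec P.toPCA
    (PTm.lam P.toPCA (PTm.recBody P.toPCA P.d (P.num 0) P.pred)) (PTm.cons a (PTm.cons w fun _ => P.k))
  obtain ⟨g, hg, hg'⟩ := PTm.lam_spec P.toPCA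
    (PTm.recBody P.toPCA P.d (P.num 0) P.pred) (PTm.cons b (PTm.cons a (PTm.cons w fun _ => P.k)))
  have hra : P.app r a = Part.some f := by rw [hr', hf]
  have hfb : P.app f b = Part.some g := by rw [hf', hg]
  have hz : P.app g (P.num 0) = Part.some a := by
    obtain ⟨x, hx, hx'⟩ := PTm.lam_spec P.toPCA PTm.recThen
      (PTm.cons (P.num 0) (PTm.cons b (PTm.cons a (PTm.cons w fun _ => P.k))))
    obtain ⟨y, hy, hy'⟩ := PTm.lam_spec P.toPCA (PTm.recElse P.pred)
      (PTm.cons (P.num 0) (PTm.cons b (PTm.cons a (PTm.cons w fun _ => P.k))))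
    have hd := P.d_eq 0 x y
    simp only [PCA.apl] at hd
    rw [hg']
    simp only [PTm.recBody, PTm.eval, hx, hy, Part.bind_some, PTm.cons]
    rw [hd, Part.bind_some, hx']
    rfl
  have hS : P.app g (P.num (n + 1)) =
      ((P.app g (P.num n)).bind fun v => P.app b v).bind fun h => P.app h (P.num n) := by
    obtain ⟨x, hx, hx'⟩ := PTm.lam_spec P.toPCA PTm.recThen
      (PTm.cons (P.num (n + 1)) (PTm.cons b (PTm.cons a (PTm.cons w fun _ => P.k))))
    obtain ⟨y, hy, hy'⟩ := PTm.lam_spec P.toPCA (PTm.recElse P.pred)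
      (PTm.cons (P.num (n + 1)) (PTm.cons b (PTm.cons a (PTm.cons w fun _ => P.k))))
    have hd := P.d_ne 0 (n + 1) x y (by omega)
    simp only [PCA.apl] at hd
    rw [hg']
    simp only [PTm.recBody, PTm.eval, hx, hy, Part.bind_some, PTm.cons]
    rw [hd, Part.bind_some, hy']
    simp only [PTm.recElse, PTm.eval, PTm.cons, Part.bind_some, hww, hra, hfb, P.pred_spec]
  simp only [PCA.apl, hra, hfb, Part.bind_some]
  exact ⟨trivial, trivial, hz, hS⟩
end

section
/- Kleene's first algebra is a pca: with partial application on ℕ defined by e·n := the value of the partial recursive function with code e on input n (in Mathlib terms, (Denumerable.ofNat Nat.Partrec.Code e).eval n), there exist k, s ∈ ℕ such that for all a, b, c ∈ ℕ: k·a, s·a, and (s·a)·b are defined, (k·a)·b ≃ a, and ((s·a)·b)·c ≃ (a·c)·(b·c), where ≃ is Kleene equality of partial values (one side is defined iff the other is, with equal values). -/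
/-- Kleene application on ℕ: `e · n` is the value at `n` of the partial
recursive function coded by `e`. -/
def kapp (e n : ℕ) : Part ℕ := (Denumerable.ofNat Nat.Partrec.Code e).eval n

/-- Application of a possibly undefined value to a number. -/
def kapl (x : Part ℕ) (b : ℕ) : Part ℕ := x.bind fun a => kapp a b

open Nat.Partrec in
theorem kapp_partrec : Partrec₂ kapp :=
  Code.eval_part.comp ((Computable.ofNat Code).comp Computable.fst) Computable.snd

theorem kapp_encode (c : Nat.Partrec.Code) (n : ℕ) : kapp (Encodable.encode c) n = c.eval n := by
  simp [kapp]

theorem exists_kcode {f : ℕ →. ℕ} (hf : Partrec f) :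
    ∃ c : Nat.Partrec.Code, c.eval = f :=
  Nat.Partrec.Code.exists_code.1 (Partrec.nat_iff.1 hf)

theorem exists_kcurry (c : Nat.Partrec.Code) :
    ∃ d : Nat.Partrec.Code, ∀ n, d.eval n = Part.some (Encodable.encode (c.curry n)) := by
  have h : Computable fun n : ℕ => Encodable.encode (c.curry n) :=
    Computable.encode.comp
      ((Nat.Partrec.Code.primrec₂_curry.comp (Primrec.const c) Primrec.id).to_comp)
  obtain ⟨d, hd⟩ := exists_kcode h.partrec
  exact ⟨d, fun n => by rw [hd]; rfl⟩

/-- **Kleene's first algebra is a pca**: there are codes `k, s ∈ ℕ` such that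
for all `a, b, c ∈ ℕ`: `k·a`, `s·a` and `(s·a)·b` are defined,
`(k·a)·b ≃ a`, and `((s·a)·b)·c ≃ (a·c)·(b·c)`. -/
theorem kleene_first_algebra_pca :
    ∃ k s : ℕ,
      (∀ a : ℕ, (kapp k a).Dom) ∧
      (∀ a : ℕ, (kapp s a).Dom) ∧
      (∀ a b : ℕ, (kapl (kapp s a) b).Dom) ∧
      (∀ a b : ℕ, kapl (kapp k a) b = Part.some a) ∧
      (∀ a b c : ℕ, kapl (kapl (kapp s a) b) c
        = (kapp a c).bind fun u => (kapp b c).bind fun v => kapp u v) := by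
  obtain ⟨p, hp⟩ := exists_kcode (f := fun n => Part.some n.unpair.1)
    (Computable.fst.comp Computable.unpair).partrec
  obtain ⟨k, hk⟩ := exists_kcurry p
  have ha : Computable fun n : ℕ => n.unpair.1.unpair.1 :=
    Computable.fst.comp (Computable.unpair.comp (Computable.fst.comp Computable.unpair))
  have hb : Computable fun n : ℕ => n.unpair.1.unpair.2 :=
    Computable.snd.comp (Computable.unpair.comp (Computable.fst.comp Computable.unpair))
  have hc : Computable fun n : ℕ => n.unpair.2 := Computable.snd.comp Computable.unpair
  have hf : Partrec fun n : ℕ => (kapp n.unpair.1.unpair.1 n.unpair.2).bind fun u =>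
      (kapp n.unpair.1.unpair.2 n.unpair.2).bind fun v => kapp u v := by
    refine Partrec.bind (kapp_partrec.comp ha hc) ?_
    refine Partrec.bind
      (kapp_partrec.comp (hb.comp Computable.fst) (hc.comp Computable.fst)) ?_
    exact kapp_partrec.comp (Computable.snd.comp Computable.fst) Computable.snd
  obtain ⟨q, hq⟩ := exists_kcode hf
  obtain ⟨r, hr⟩ := exists_kcurry q
  obtain ⟨s, hs⟩ := exists_kcurry r
  refine ⟨Encodable.encode k, Encodable.encode s, ?_, ?_, ?_, ?_, ?_⟩
  · intro a; simp [kapp_encode, hk]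
  · intro a; simp [kapp_encode, hs]
  · intro a b
    simp only [kapl, kapp_encode, hs, Part.bind_some, Nat.Partrec.Code.eval_curry, hr]
    trivial
  · intro a b
    simp only [kapl, kapp_encode, hk, Part.bind_some, Nat.Partrec.Code.eval_curry, hp,
      Nat.unpair_pair]
  · intro a b c
    simp only [kapl, kapp_encode, hs, Part.bind_some, Nat.Partrec.Code.eval_curry, hr, hq,
      Nat.unpair_pair]
end

section
/- Let A be a pca. There exists an element i_r ∈ A such that for every x ∈ V(A): i_r = i_r ⊩ x = x. -/
universe u

/-- The ZF-set coding the triple `⟨a, b, y⟩` (via an embedding `inj` of the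
pca carrier into the sets). -/
def TripleName {A : Type} (inj : A → ZFSet) (a b : A) (y : ZFSet) : ZFSet :=
  ZFSet.pair (inj a) (ZFSet.pair (inj b) y)

/-- The realizability universe `V(A)`: a ZF-set is a name iff it is a set of
triples `⟨a, b, y⟩` with `a b : A` and `y` a name.  (For injective `inj` the
decomposition of a triple is unique, so the two clauses express exactly this.) -/
inductive IsName {A : Type} (inj : A → ZFSet) : ZFSet → Prop
  | mk (x : ZFSet)
      (htriple : ∀ z ∈ x, ∃ (a b : A) (y : ZFSet), z = TripleName inj a b y)
      (hname : ∀ (a b : A) (y : ZFSet), TripleName inj a b y ∈ x → IsName inj y) :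
      IsName inj x

/-- Extensional generic realizability for the atomic formulas, relative to
fixed projection combinators `p0`, `p1`:
`Realizes P p0 p1 inj true a b x y` means `a = b ⊩ x ∈ y`, and
`Realizes P p0 p1 inj false a b x y` means `a = b ⊩ x = y`.
Since the value of a partial application is unique when it exists, the pairs
of hypotheses `(h1def, h1)` and `(h2def, h2)` of the `eq` constructor express
exactly "for every ⟨c,d,z⟩ ∈ x, (ac)₀ = (bd)₀ ⊩ z ∈ y" (with all the
applications defined), and symmetrically for `y` with `p1`; the relation is
well-founded in the rank of the names, hence this least fixed point is the
relation defined by transfinite recursion. -/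
inductive Realizes {A : Type} (P : PCA A) (p0 p1 : A) (inj : A → ZFSet) :
    Bool → A → A → ZFSet → ZFSet → Prop
  | mem {a b : A} {x y : ZFSet} (a0 b0 a1 b1 : A) (z : ZFSet)
      (ha0 : a0 ∈ P.app p0 a) (hb0 : b0 ∈ P.app p0 b)
      (ha1 : a1 ∈ P.app p1 a) (hb1 : b1 ∈ P.app p1 b)
      (hz : TripleName inj a0 b0 z ∈ y)
      (he : Realizes P p0 p1 inj false a1 b1 x z) :
      Realizes P p0 p1 inj true a b x y
  | eq {a b : A} {x y : ZFSet}
      (h1def : ∀ (c d : A) (z : ZFSet), TripleName inj c d z ∈ x →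
        ∃ u v u0 v0 : A, u ∈ P.app a c ∧ v ∈ P.app b d ∧
          u0 ∈ P.app p0 u ∧ v0 ∈ P.app p0 v)
      (h1 : ∀ (c d : A) (z : ZFSet) (u v u0 v0 : A), TripleName inj c d z ∈ x →
        u ∈ P.app a c → v ∈ P.app b d → u0 ∈ P.app p0 u → v0 ∈ P.app p0 v →
        Realizes P p0 p1 inj true u0 v0 z y)
      (h2def : ∀ (c d : A) (z : ZFSet), TripleName inj c d z ∈ y →
        ∃ u v u1 v1 : A, u ∈ P.app a c ∧ v ∈ P.app b d ∧
          u1 ∈ P.app p1 u ∧ v1 ∈ P.app p1 v)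
      (h2 : ∀ (c d : A) (z : ZFSet) (u v u1 v1 : A), TripleName inj c d z ∈ y →
        u ∈ P.app a c → v ∈ P.app b d → u1 ∈ P.app p1 u → v1 ∈ P.app p1 v →
        Realizes P p0 p1 inj true u1 v1 z x) :
      Realizes P p0 p1 inj false a b x y

/-- `a = b ⊩ x = y`. -/
def RealEq {A : Type} (P : PCA A) (p0 p1 : A) (inj : A → ZFSet) (a b : A) (x y : ZFSet) : Prop :=
  Realizes P p0 p1 inj false a b x y

/-- `a = b ⊩ x ∈ y`. -/
def RealMem {A : Type} (P : PCA A) (p0 p1 : A) (inj : A → ZFSet) (a b : A) (x y : ZFSet) : Prop :=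
  Realizes P p0 p1 inj true a b x y

theorem PCA.exK {A : Type} (P : PCA A) : ∃ K : A → A, (∀ a, K a ∈ P.app P.k a) ∧
    ∀ a b, a ∈ P.app (K a) b := by
  refine ⟨fun a => (P.app P.k a).get (P.k_def a), fun a => Part.get_mem _, fun a b => ?_⟩
  have h := Part.mem_some a
  rw [← P.k_spec a b, Part.mem_bind_iff] at h
  obtain ⟨x, hx, h⟩ := h
  have e := Part.mem_unique hx (Part.get_mem (P.k_def a))
  subst e
  exact h

theorem PCA.exS {A : Type} (P : PCA A) : ∃ (S1 : A → A) (S : A → A → A),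
    (∀ a, S1 a ∈ P.app P.s a) ∧ (∀ a b, S a b ∈ P.app (S1 a) b) ∧
    ∀ a b c u v w, u ∈ P.app a c → v ∈ P.app b c → w ∈ P.app u v → w ∈ P.app (S a b) c := by
  have h1 : ∀ a, ∃ x, x ∈ P.app P.s a := fun a => ⟨_, Part.get_mem (P.s_def a)⟩
  choose S1 hS1 using h1
  have h2 : ∀ a b, ∃ x, x ∈ P.app (S1 a) b := by
    intro a b
    obtain ⟨y, hy, h⟩ := Part.mem_bind_iff.1 (Part.get_mem (P.s_app_def a b))
    exact ⟨_, Part.mem_unique hy (hS1 a) ▸ h⟩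
  choose S hS using h2
  refine ⟨S1, S, hS1, hS, fun a b c u v w hu hv hw => ?_⟩
  have h : w ∈ (P.app a c).bind fun u => (P.app b c).bind fun v => P.app u v :=
    Part.mem_bind hu (Part.mem_bind hv hw)
  rw [← P.s_spec, Part.mem_bind_iff] at h
  obtain ⟨x, hx, h⟩ := h
  obtain ⟨y, hy, hx⟩ := Part.mem_bind_iff.1 hx
  obtain rfl := Part.mem_unique hy (hS1 a)
  obtain rfl := Part.mem_unique hx (hS a b)
  exact h

theorem PCA.exFix {A : Type} (P : PCA A) (p : A)
    (hp : ∀ a b : A, (P.apl (P.app p a) b).Dom) :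
    ∃ ir : A, ∀ c, ∃ p1 q p2 w, p1 ∈ P.app p c ∧ q ∈ P.app p1 ir ∧ p2 ∈ P.app p q ∧
      w ∈ P.app p2 q ∧ w ∈ P.app ir c := by
  obtain ⟨K, hK1, hK⟩ := P.exK
  obtain ⟨S1, S, hS1, hS2, hS⟩ := P.exS
  have hpp : ∀ a b, ∃ x y, x ∈ P.app p a ∧ y ∈ P.app x b := by
    intro a b
    obtain ⟨y, hy, h⟩ := Part.mem_bind_iff.1 (Part.get_mem (hp a b))
    exact ⟨_, _, hy, h⟩
  have rc : ∀ b, ∃ e, ∀ a, b ∈ P.app e a := fun b => ⟨K b, hK b⟩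
  have ra : ∀ f g h : A → A, (∃ e, ∀ a, f a ∈ P.app e a) → (∃ e, ∀ a, g a ∈ P.app e a) →
      (∀ a, h a ∈ P.app (f a) (g a)) → ∃ e, ∀ a, h a ∈ P.app e a := by
    rintro f g h ⟨e, he⟩ ⟨e', he'⟩ hh
    exact ⟨S e e', fun a => hS _ _ _ _ _ _ (he a) (he' a) (hh a)⟩
  have rK : ∃ e, ∀ a, K a ∈ P.app e a := ⟨P.k, hK1⟩
  have rS : ∀ f g : A → A, (∃ e, ∀ a, f a ∈ P.app e a) → (∃ e, ∀ a, g a ∈ P.app e a) →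
      ∃ e, ∀ a, S (f a) (g a) ∈ P.app e a := fun f g hf hg =>
    ra (fun a => S1 (f a)) g _ (ra (fun _ => P.s) f _ (rc _) hf (fun a => hS1 _)) hg
      (fun a => hS2 _ _)
  have rX := rS (fun _ => p) _ (rc p) (rS _ _ rK rK)
  obtain ⟨W, hW⟩ := rS _ _ (rS (fun _ => K p) _ (rc _) rX) rX
  refine ⟨S (S (K p) (S p (S (K W) (K W)))) (S p (S (K W) (K W))), fun c => ?_⟩
  · obtain ⟨x, q, hx, hq⟩ := hpp c (S (S (K p) (S p (S (K W) (K W)))) (S p (S (K W) (K W))))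
    obtain ⟨y, w, hy, hw⟩ := hpp q q
    have hX : q ∈ P.app (S p (S (K W) (K W))) c :=
      hS _ _ _ _ _ _ hx (hS _ _ _ _ _ _ (hK W c) (hK W c) (hW W)) hq
    exact ⟨x, q, y, w, hx, hq, hy, hw,
      hS _ _ _ _ _ _ (hS _ _ _ _ _ _ (hK p c) hX hy) hX hw⟩

/-- **Reflexivity of equality is realized**: there is `i_r ∈ A` with
`i_r = i_r ⊩ x = x` for every `x ∈ V(A)`. -/
theorem refl_realized {A : Type} (P : PCA A)
    (p p0 p1 : A)
    (hp : ∀ a b : A, (P.apl (P.app p a) b).Dom)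
    (hp0 : ∀ a b : A, ((P.apl (P.app p a) b).bind fun w => P.app p0 w) = Part.some a)
    (hp1 : ∀ a b : A, ((P.apl (P.app p a) b).bind fun w => P.app p1 w) = Part.some b)
    (inj : A → ZFSet) (hinj : Function.Injective inj)
    :
    ∃ ir : A, ∀ x : ZFSet, IsName inj x → RealEq P p0 p1 inj ir ir x x := by
  obtain ⟨ir, hir⟩ := P.exFix p hp
  have e0 : ∀ a b x w, x ∈ P.app p a → w ∈ P.app x b → a ∈ P.app p0 w := by
    intro a b x w hx hw
    have h := hp0 a b
    rw [PCA.apl, Part.eq_some_iff.2 hx, Part.bind_some, Part.eq_some_iff.2 hw,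
      Part.bind_some] at h
    exact Part.eq_some_iff.1 h
  have e1 : ∀ a b x w, x ∈ P.app p a → w ∈ P.app x b → b ∈ P.app p1 w := by
    intro a b x w hx hw
    have h := hp1 a b
    rw [PCA.apl, Part.eq_some_iff.2 hx, Part.bind_some, Part.eq_some_iff.2 hw,
      Part.bind_some] at h
    exact Part.eq_some_iff.1 h
  have key : ∀ c, ∃ q w, w ∈ P.app ir c ∧ q ∈ P.app p0 w ∧ q ∈ P.app p1 w ∧
      c ∈ P.app p0 q ∧ ir ∈ P.app p1 q := by
    intro c
    obtain ⟨x, q, y, w, hx, hq, hy, hw, h⟩ := hir c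
    exact ⟨q, w, h, e0 _ _ _ _ hy hw, e1 _ _ _ _ hy hw, e0 _ _ _ _ hx hq, e1 _ _ _ _ hx hq⟩
  choose q w hw hq0 hq1 hc hi using key
  refine ⟨ir, fun x hx => ?_⟩
  induction hx with
  | mk x _ _ ih =>
    have main : ∀ c d z, TripleName inj c d z ∈ x →
        Realizes P p0 p1 inj true (q c) (q d) z x := fun c d z hz =>
      Realizes.mem c d ir ir z (hc c) (hc d) (hi c) (hi d) hz (ih c d z hz)
    refine Realizes.eq ?_ ?_ ?_ ?_
    · exact fun c d z _ => ⟨_, _, _, _, hw c, hw d, hq0 c, hq0 d⟩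
    · intro c d z u v u0 v0 hz hu hv hu0 hv0
      obtain rfl := Part.mem_unique hu (hw c)
      obtain rfl := Part.mem_unique hv (hw d)
      obtain rfl := Part.mem_unique hu0 (hq0 c)
      obtain rfl := Part.mem_unique hv0 (hq0 d)
      exact main c d z hz
    · exact fun c d z _ => ⟨_, _, _, _, hw c, hw d, hq1 c, hq1 d⟩
    · intro c d z u v u0 v0 hz hu hv hu0 hv0
      obtain rfl := Part.mem_unique hu (hw c)
      obtain rfl := Part.mem_unique hv (hw d)
      obtain rfl := Part.mem_unique hu0 (hq1 c)
      obtain rfl := Part.mem_unique hv0 (hq1 d)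
      exact main c d z hz
end

section
/- Absoluteness and uniqueness up to extensional equality: let A be a pca over ω and σ a finite type. For all a, b ∈ A_σ: (i) if there exist g, h ∈ A with g = h ⊩ ⟦a⟧_σ = ⟦b⟧_σ, then a =_σ b; and (ii) if a =_σ b, then ⟦a⟧_σ = ⟦b⟧_σ (literal equality of sets). -/
universe u

/-- Finite types, generated from the base type `o` by function types. -/
inductive FType : Type
  | o : FType
  | arrow : FType → FType → FType

/-- The extensional equality relation `=_σ` at finite type `σ`:
`a =_o b` iff `a = b = n̄` for some `n`; `a =_{στ} b` iff for all `c =_σ d`,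
`ac` and `bd` are defined and `ac =_τ bd`. -/
def PCAOmega.teq {A : Type u} (P : PCAOmega A) : FType → A → A → Prop
  | .o, a, b => ∃ n : ℕ, a = P.num n ∧ b = P.num n
  | .arrow σ τ, a, b => ∀ c d : A, P.teq σ c d →
      ∃ e f : A, e ∈ P.app a c ∧ f ∈ P.app b d ∧ P.teq τ e f

/-- The name `⟦n̄⟧_o = {⟨m̄,m̄,⟦m̄⟧_o⟩ : m < n}` of the natural number `n`. -/
noncomputable def oInterp {A : Type} (P : PCAOmega A) (inj : A → ZFSet) : ℕ → ZFSet
  | n => ZFSet.range fun m : Fin n =>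
      TripleName inj (P.num m.1) (P.num m.1) (oInterp P inj m.1)
  decreasing_by exact m.2

/-- The name `{x}• = {⟨0̄,0̄,x⟩}`. -/
noncomputable def vSingle {A : Type} (P : PCAOmega A) (inj : A → ZFSet) (x : ZFSet) : ZFSet :=
  {TripleName inj (P.num 0) (P.num 0) x}

/-- The name `{x, y}• = {⟨0̄,0̄,x⟩, ⟨1̄,1̄,y⟩}`. -/
noncomputable def vUPair {A : Type} (P : PCAOmega A) (inj : A → ZFSet) (x y : ZFSet) : ZFSet :=
  {TripleName inj (P.num 0) (P.num 0) x, TripleName inj (P.num 1) (P.num 1) y}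

/-- The name `⟨x, y⟩• = {⟨0̄,0̄,{x}•⟩, ⟨1̄,1̄,{x,y}•⟩}` of the ordered pair. -/
noncomputable def vOPair {A : Type} (P : PCAOmega A) (inj : A → ZFSet) (x y : ZFSet) : ZFSet :=
  {TripleName inj (P.num 0) (P.num 0) (vSingle P inj x),
   TripleName inj (P.num 1) (P.num 1) (vUPair P inj x y)}

/-- The name `⟦a⟧_σ` of an element `a ∈ A_σ`:
`⟦n̄⟧_o = {⟨m̄,m̄,⟦m̄⟧_o⟩ : m < n}` and
`⟦a⟧_{στ} = {⟨c,d,⟨⟦c⟧_σ,⟦e⟧_τ⟩•⟩ : c =_σ d, ac ≃ e}`.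
(On the base type, `Classical.epsilon` picks the unique `n` with `a = n̄`.) -/
noncomputable def interp {A : Type} (P : PCAOmega A) (inj : A → ZFSet) :
    FType → A → ZFSet
  | .o, a => oInterp P inj (Classical.epsilon fun n : ℕ => a = P.num n)
  | .arrow σ τ, a =>
      ZFSet.range fun w :
          {cde : A × A × A // P.teq σ cde.1 cde.2.1 ∧ cde.2.2 ∈ P.app a cde.1} =>
        TripleName inj w.1.1 w.1.2.1
          (vOPair P inj (interp P inj σ w.1.1) (interp P inj τ w.1.2.2))

theorem PCAOmega.teq_symm {A : Type u} (P : PCAOmega A) (σ : FType) :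
    ∀ a b, P.teq σ a b → P.teq σ b a := by
  induction σ with
  | o =>
    rintro a b ⟨n, h1, h2⟩
    exact ⟨n, h2, h1⟩
  | arrow σ τ ihσ ihτ =>
    intro a b h c d hcd
    obtain ⟨e, f, he, hf, hef⟩ := h d c (ihσ _ _ hcd)
    exact ⟨f, e, hf, he, ihτ _ _ hef⟩

theorem PCAOmega.teq_trans {A : Type u} (P : PCAOmega A) (σ : FType) :
    ∀ a b c, P.teq σ a b → P.teq σ b c → P.teq σ a c := by
  induction σ with
  | o =>
    rintro a b c ⟨n, h1, h2⟩ ⟨m, h3, h4⟩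
    exact ⟨n, h1, by rw [h4, ← h3, h2]⟩
  | arrow σ τ ihσ ihτ =>
    intro a b c h1 h2 x y hxy
    obtain ⟨e, f, he, hf, hef⟩ := h1 x y hxy
    obtain ⟨e', f', he', hf', hef'⟩ := h2 y y (ihσ _ _ _ (P.teq_symm _ _ _ hxy) hxy)
    obtain rfl := Part.mem_unique hf he'
    exact ⟨e, f', he, hf', ihτ _ _ _ hef hef'⟩

theorem triple_snd {A : Type} {inj : A → ZFSet} {a b c d : A} {y z : ZFSet}
    (h : TripleName inj a b y = TripleName inj c d z) : y = z := by
  unfold TripleName at h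
  exact (ZFSet.pair_inj.1 (ZFSet.pair_inj.1 h).2).2

theorem triple_rank {A : Type} {inj : A → ZFSet} {a b : A} {y x : ZFSet}
    (h : TripleName inj a b y ∈ x) : y.rank < x.rank := by
  have h1 := ZFSet.rank_lt_of_mem h
  have key : ∀ u v : ZFSet, v.rank < (ZFSet.pair u v).rank := by
    intro u v
    have h1 : v ∈ ({u, v} : ZFSet) := by simp
    have h2 : ({u, v} : ZFSet) ∈ ZFSet.pair u v := by simp [ZFSet.pair]
    exact (ZFSet.rank_lt_of_mem h1).trans (ZFSet.rank_lt_of_mem h2)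
  exact ((key _ _).trans (key _ _)).trans h1

instance smallTripleSub {A : Type} (inj : A → ZFSet.{u}) (x : ZFSet.{u}) :
    Small.{u} {w : {w // w ∈ x} // ∃ (a b : A) (y : ZFSet.{u}), w.1 = TripleName inj a b y} :=
  haveI : Small.{u} {w // w ∈ x} := inferInstance
  small_subtype _ _

/-- Collapse of a name, forgetting the realizers. -/
noncomputable def col {A : Type} (inj : A → ZFSet.{u}) (x : ZFSet.{u}) : ZFSet.{u} :=
  ZFSet.range fun w : {w : {w // w ∈ x} // ∃ (a b : A) (y : ZFSet), w.1 = TripleName inj a b y} =>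
    col inj (w.2.choose_spec.choose_spec.choose)
  termination_by x.rank
  decreasing_by
    apply triple_rank (inj := inj) (a := w.2.choose) (b := w.2.choose_spec.choose)
    rw [← w.2.choose_spec.choose_spec.choose_spec]
    exact w.1.2

theorem mem_col {A : Type} (inj : A → ZFSet) (x z : ZFSet) :
    z ∈ col inj x ↔ ∃ a b y, TripleName inj a b y ∈ x ∧ z = col inj y := by
  rw [col, ZFSet.mem_range]
  constructor
  · rintro ⟨w, rfl⟩
    refine ⟨w.2.choose, w.2.choose_spec.choose, w.2.choose_spec.choose_spec.choose, ?_, rfl⟩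
    rw [← w.2.choose_spec.choose_spec.choose_spec]
    exact w.1.2
  · rintro ⟨a, b, y, h, rfl⟩
    have hw : ∃ (a' b' : A) (y' : ZFSet), TripleName inj a b y = TripleName inj a' b' y' :=
      ⟨a, b, y, rfl⟩
    refine ⟨⟨⟨_, h⟩, hw⟩, ?_⟩
    exact congrArg (col inj) (triple_snd hw.choose_spec.choose_spec.choose_spec).symm

theorem Realizes.col_eq {A : Type} {P : PCA A} {p0 p1 : A} {inj : A → ZFSet}
    {t : Bool} {a b : A} {x y : ZFSet} (h : Realizes P p0 p1 inj t a b x y) :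
    if t then col inj x ∈ col inj y else col inj x = col inj y := by
  induction h with
  | mem a0 b0 a1 b1 z ha0 hb0 ha1 hb1 hz he ih =>
    simp only [Bool.false_eq_true, if_false, if_true] at ih ⊢
    exact (mem_col _ _ _).2 ⟨a0, b0, z, hz, ih⟩
  | eq h1def h1 h2def h2 ih1 ih2 =>
    simp only [Bool.false_eq_true, if_false, if_true] at ih1 ih2 ⊢
    ext w
    constructor
    · intro hw
      obtain ⟨c, d, z, hz, rfl⟩ := (mem_col _ _ _).1 hw
      obtain ⟨u, v, u0, v0, hu, hv, hu0, hv0⟩ := h1def c d z hz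
      exact ih1 c d z u v u0 v0 hz hu hv hu0 hv0
    · intro hw
      obtain ⟨c, d, z, hz, rfl⟩ := (mem_col _ _ _).1 hw
      obtain ⟨u, v, u0, v0, hu, hv, hu0, hv0⟩ := h2def c d z hz
      exact ih2 c d z u v u0 v0 hz hu hv hu0 hv0

theorem col_vOPair {A : Type} (P : PCAOmega A) (inj : A → ZFSet) (x y : ZFSet) :
    col inj (vOPair P inj x y) = ZFSet.pair (col inj x) (col inj y) := by
  have h1 : col inj (vSingle P inj x) = {col inj x} := by
    ext w
    rw [mem_col, ZFSet.mem_singleton]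
    constructor
    · rintro ⟨a, b, z, hz, rfl⟩
      rw [vSingle, ZFSet.mem_singleton] at hz
      rw [triple_snd hz]
    · rintro rfl
      exact ⟨_, _, x, by rw [vSingle, ZFSet.mem_singleton], rfl⟩
  have h2 : ∀ a b c d : A, ∀ u v, col inj {TripleName inj a b u, TripleName inj c d v}
      = {col inj u, col inj v} := by
    intro a b c d u v
    ext w
    rw [mem_col, ZFSet.mem_pair]
    constructor
    · rintro ⟨a, b, z, hz, rfl⟩
      rw [ZFSet.mem_pair] at hz
      rcases hz with hz | hz
      · left; rw [triple_snd hz]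
      · right; rw [triple_snd hz]
    · rintro (rfl | rfl)
      · exact ⟨a, b, u, by simp, rfl⟩
      · exact ⟨c, d, v, by simp, rfl⟩
  rw [vOPair, h2, h1, vUPair, h2, ZFSet.pair]

theorem col_oInterp_mem {A : Type} (P : PCAOmega A) (inj : A → ZFSet) {m n : ℕ} (h : m < n) :
    col inj (oInterp P inj m) ∈ col inj (oInterp P inj n) := by
  rw [mem_col]
  refine ⟨P.num m, P.num m, _, ?_, rfl⟩
  rw [oInterp.eq_1 P inj n, ZFSet.mem_range]
  exact ⟨⟨m, h⟩, rfl⟩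

theorem col_oInterp_inj {A : Type} (P : PCAOmega A) (inj : A → ZFSet) {m n : ℕ}
    (h : col inj (oInterp P inj m) = col inj (oInterp P inj n)) : m = n := by
  rcases lt_trichotomy m n with hl | hl | hl
  · have := col_oInterp_mem P inj hl
    rw [h] at this
    exact absurd this (ZFSet.mem_irrefl _)
  · exact hl
  · have := col_oInterp_mem P inj hl
    rw [h] at this
    exact absurd this (ZFSet.mem_irrefl _)

theorem mem_interp_arrow {A : Type} (P : PCAOmega A) (inj : A → ZFSet) (σ τ : FType) (a : A)
    (z : ZFSet) : z ∈ interp P inj (.arrow σ τ) a ↔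
      ∃ c d e, P.teq σ c d ∧ e ∈ P.app a c ∧
        z = TripleName inj c d (vOPair P inj (interp P inj σ c) (interp P inj τ e)) := by
  rw [interp, ZFSet.mem_range]
  constructor
  · rintro ⟨⟨⟨c, d, e⟩, h1, h2⟩, rfl⟩
    exact ⟨c, d, e, h1, h2, rfl⟩
  · rintro ⟨c, d, e, h1, h2, rfl⟩
    exact ⟨⟨⟨c, d, e⟩, h1, h2⟩, rfl⟩

theorem interp_eq_of_teq {A : Type} (P : PCAOmega A) (inj : A → ZFSet) (σ : FType) :
    ∀ a b, P.teq σ a b → interp P inj σ a = interp P inj σ b := by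
  induction σ with
  | o =>
    rintro a b ⟨n, rfl, rfl⟩
    rfl
  | arrow σ τ ihσ ihτ =>
    have key : ∀ a b, P.teq (.arrow σ τ) a b → ∀ z, z ∈ interp P inj (.arrow σ τ) a →
        z ∈ interp P inj (.arrow σ τ) b := by
      intro a b h z hz
      rw [mem_interp_arrow] at hz ⊢
      obtain ⟨c, d, e, hcd, he, rfl⟩ := hz
      obtain ⟨e', f, he', hf, hef⟩ :=
        h c c (P.teq_trans _ _ _ _ hcd (P.teq_symm _ _ _ hcd))
      obtain rfl := Part.mem_unique he he'
      exact ⟨c, d, f, hcd, hf, by rw [ihτ _ _ hef]⟩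
    intro a b h
    ext z
    exact ⟨key a b h z, key b a (P.teq_symm _ _ _ h) z⟩

theorem teq_of_col {A : Type} (P : PCAOmega A) (inj : A → ZFSet) (σ : FType) :
    ∀ a b, P.teq σ a a → P.teq σ b b →
      col inj (interp P inj σ a) = col inj (interp P inj σ b) → P.teq σ a b := by
  induction σ with
  | o =>
    rintro a b ⟨n, hn, -⟩ ⟨m, hm, -⟩ h
    rw [interp, interp] at h
    have h' := col_oInterp_inj P inj h
    have ea := Classical.epsilon_spec (p := fun n : ℕ => a = P.num n) ⟨n, hn⟩
    have eb := Classical.epsilon_spec (p := fun n : ℕ => b = P.num n) ⟨m, hm⟩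
    rw [← h'] at eb
    exact ⟨_, ea, eb⟩
  | arrow σ τ ihσ ihτ =>
    intro a b ha hb h c d hcd
    have hcc := P.teq_trans _ _ _ _ hcd (P.teq_symm _ _ _ hcd)
    obtain ⟨e, e1, he, he1, hee⟩ := ha c c hcc
    obtain rfl := Part.mem_unique he he1
    have hm : col inj (vOPair P inj (interp P inj σ c) (interp P inj τ e)) ∈
        col inj (interp P inj (.arrow σ τ) a) :=
      (mem_col _ _ _).2 ⟨c, d, _, (mem_interp_arrow _ _ _ _ _ _).2
        ⟨c, d, e, hcd, he, rfl⟩, rfl⟩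
    rw [h] at hm
    obtain ⟨x, y, z, hz, hze⟩ := (mem_col _ _ _).1 hm
    obtain ⟨c', d', f', hcd', hf', heq⟩ := (mem_interp_arrow _ _ _ _ _ _).1 hz
    rw [triple_snd heq, col_vOPair, col_vOPair, ZFSet.pair_inj] at hze
    have hcc' := P.teq_trans _ _ _ _ hcd' (P.teq_symm _ _ _ hcd')
    have hc := ihσ c c' hcc hcc' hze.1
    obtain ⟨f1, f2, hf1, hf2, hff⟩ := hb c' c' hcc'
    obtain rfl := Part.mem_unique hf1 hf2
    obtain rfl := Part.mem_unique hf' hf1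
    have hef := ihτ e f' hee hff hze.2
    obtain ⟨f3, f, hf3, hf, hff'⟩ := hb c' d (P.teq_trans _ _ _ _ (P.teq_symm _ _ _ hc) hcd)
    obtain rfl := Part.mem_unique hf' hf3
    exact ⟨e, f, he, hf, P.teq_trans _ _ _ _ hef hff'⟩

/-- **Absoluteness and uniqueness up to extensional equality**: for
`a, b ∈ A_σ`, (i) if some `g, h` realize `⟦a⟧_σ = ⟦b⟧_σ` then `a =_σ b`, and
(ii) if `a =_σ b` then `⟦a⟧_σ` and `⟦b⟧_σ` are literally the same set. -/
theorem interp_absolute_unique {A : Type} (P : PCAOmega A)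
    (p p0 p1 : A)
    (hp : ∀ a b : A, (P.toPCA.apl (P.app p a) b).Dom)
    (hp0 : ∀ a b : A, ((P.toPCA.apl (P.app p a) b).bind fun w => P.app p0 w) = Part.some a)
    (hp1 : ∀ a b : A, ((P.toPCA.apl (P.app p a) b).bind fun w => P.app p1 w) = Part.some b)
    (inj : A → ZFSet) (hinj : Function.Injective inj)
    (σ : FType) (a b : A) (ha : P.teq σ a a) (hb : P.teq σ b b) :
    ((∃ g h : A, RealEq P.toPCA p0 p1 inj g h (interp P inj σ a) (interp P inj σ b)) →
      P.teq σ a b) ∧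
    (P.teq σ a b → interp P inj σ a = interp P inj σ b) := by
  refine ⟨?_, interp_eq_of_teq P inj σ a b⟩
  rintro ⟨g, h, hr⟩
  refine teq_of_col P inj σ a b ha hb ?_
  simpa using Realizes.col_eq hr
end

section
/- The Pairing axiom is realized: let A be a pca. There exists an element e ∈ A such that for all x, y ∈ V(A) there exists z ∈ V(A) with (e)₀ and (e)₁ defined, (e)₀ = (e)₀ ⊩ x ∈ z, and (e)₁ = (e)₁ ⊩ y ∈ z. -/
universe u

theorem exists_refl_realizer {A : Type} (P : PCA A)
    (p p0 p1 : A)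
    (hp : ∀ a b : A, (P.apl (P.app p a) b).Dom)
    (hp0 : ∀ a b : A, ((P.apl (P.app p a) b).bind fun w => P.app p0 w) = Part.some a)
    (hp1 : ∀ a b : A, ((P.apl (P.app p a) b).bind fun w => P.app p1 w) = Part.some b) :
    ∃ (pr : A → A → A) (i : A), (∀ a b, P.app p0 (pr a b) = Part.some a) ∧
      (∀ a b, P.app p1 (pr a b) = Part.some b) ∧
      ∀ c, P.app i c = Part.some (pr (pr c i) (pr c i)) := by
  have hk : ∀ a, ∃ r, P.app P.k a = Part.some r := fun a =>
    ⟨_, Part.eq_some_iff.2 (Part.get_mem (P.k_def a))⟩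
  have hs : ∀ a, ∃ r, P.app P.s a = Part.some r := fun a =>
    ⟨_, Part.eq_some_iff.2 (Part.get_mem (P.s_def a))⟩
  choose K hK using hk
  choose S1 hS1 using hs
  have hK2 : ∀ a b, P.app (K a) b = Part.some a := fun a b => by
    simpa [hK] using P.k_spec a b
  have hs2 : ∀ a b, ∃ r, P.app (S1 a) b = Part.some r := fun a b => by
    have h := P.s_app_def a b
    rw [hS1, Part.bind_some] at h
    exact ⟨_, Part.eq_some_iff.2 (Part.get_mem h)⟩
  choose S2 hS2 using hs2
  have hS : ∀ a b c, P.app (S2 a b) c =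
      (P.app a c).bind fun u => (P.app b c).bind fun v => P.app u v := fun a b c => by
    simpa [hS1, hS2] using P.s_spec a b c
  have hpa : ∀ a, ∃ r, P.app p a = Part.some r := fun a =>
    ⟨_, Part.eq_some_iff.2 (Part.get_mem (Part.Dom.of_bind (hp a a)))⟩
  choose Q hQ using hpa
  have hpb : ∀ a b, ∃ r, P.app (Q a) b = Part.some r := fun a b => by
    have h := hp a b
    rw [PCA.apl, hQ, Part.bind_some] at h
    exact ⟨_, Part.eq_some_iff.2 (Part.get_mem h)⟩
  choose pr hpr using hpb
  let W := S2 p (S2 P.k P.k)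
  let B := S2 (S2 (K P.s) P.k) P.k
  let g := S2 (K (S1 (K W))) (S2 (K (S1 p)) B)
  have hW : ∀ x, P.app W x = Part.some (pr x x) := fun x => by
    simp [W, hS, hK, hK2, hQ, hpr]
  have hg : ∀ h, P.app g h = Part.some (S2 (K W) (S2 p (S2 (K h) (K h)))) := fun h => by
    simp [g, B, hS, hK, hK2, hS1, hS2]
  refine ⟨pr, S2 (K W) (S2 p (S2 (K g) (K g))), fun a b => ?_, fun a b => ?_, fun c => ?_⟩
  · simpa [PCA.apl, hQ, hpr] using hp0 a b
  · simpa [PCA.apl, hQ, hpr] using hp1 a b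
  · simp [hS, hK2, hg, hQ, hpr, hW]

theorem refl_realized_s16 {A : Type} (P : PCA A) (p0 p1 : A) (inj : A → ZFSet)
    (pr : A → A → A) (i : A) (h0 : ∀ a b, P.app p0 (pr a b) = Part.some a)
    (h1 : ∀ a b, P.app p1 (pr a b) = Part.some b)
    (hi : ∀ c, P.app i c = Part.some (pr (pr c i) (pr c i)))
    (x : ZFSet) (hx : IsName inj x) : Realizes P p0 p1 inj false i i x x := by
  induction hx with
  | mk x ht hn ih =>
    have key : ∀ c d z, TripleName inj c d z ∈ x →
        Realizes P p0 p1 inj true (pr c i) (pr d i) z x := fun c d z hz =>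
      Realizes.mem c d i i z (by simp [h0]) (by simp [h0]) (by simp [h1]) (by simp [h1]) hz
        (ih c d z hz)
    refine Realizes.eq ?_ ?_ ?_ ?_
    · intro c d z _
      exact ⟨_, _, pr c i, pr d i, by rw [hi]; exact Part.mem_some _,
        by rw [hi]; exact Part.mem_some _, by simp [h0], by simp [h0]⟩
    · intro c d z u v u0 v0 hz hu hv hu0 hv0
      rw [hi, Part.mem_some_iff] at hu hv
      subst hu hv
      rw [h0, Part.mem_some_iff] at hu0 hv0
      subst hu0 hv0
      exact key c d z hz
    · intro c d z _
      exact ⟨_, _, pr c i, pr d i, by rw [hi]; exact Part.mem_some _,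
        by rw [hi]; exact Part.mem_some _, by simp [h1], by simp [h1]⟩
    · intro c d z u v u0 v0 hz hu hv hu0 hv0
      rw [hi, Part.mem_some_iff] at hu hv
      subst hu hv
      rw [h1, Part.mem_some_iff] at hu0 hv0
      subst hu0 hv0
      exact key c d z hz

/-- **The Pairing axiom is realized**: there is `e ∈ A` such that for all
`x, y ∈ V(A)` there is `z ∈ V(A)` with `(e)₀` and `(e)₁` defined,
`(e)₀ = (e)₀ ⊩ x ∈ z` and `(e)₁ = (e)₁ ⊩ y ∈ z`. -/
theorem pairing_realized {A : Type} (P : PCA A)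
    (p p0 p1 : A)
    (hp : ∀ a b : A, (P.apl (P.app p a) b).Dom)
    (hp0 : ∀ a b : A, ((P.apl (P.app p a) b).bind fun w => P.app p0 w) = Part.some a)
    (hp1 : ∀ a b : A, ((P.apl (P.app p a) b).bind fun w => P.app p1 w) = Part.some b)
    (inj : A → ZFSet) (hinj : Function.Injective inj)
    :
    ∃ e : A, ∀ x y : ZFSet, IsName inj x → IsName inj y →
      ∃ z : ZFSet, IsName inj z ∧
        (∃ e0 : A, e0 ∈ P.app p0 e ∧ RealMem P p0 p1 inj e0 e0 x z) ∧
        (∃ e1 : A, e1 ∈ P.app p1 e ∧ RealMem P p0 p1 inj e1 e1 y z) := by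
  obtain ⟨pr, i, h0, h1, hi⟩ := exists_refl_realizer P p p0 p1 hp hp0 hp1
  refine ⟨pr (pr i i) (pr i i), fun x y hx hy =>
    ⟨{TripleName inj i i x, TripleName inj i i y}, ?_, ⟨pr i i, by simp [h0], ?_⟩,
      ⟨pr i i, by simp [h1], ?_⟩⟩⟩
  · refine IsName.mk _ ?_ ?_
    · intro z hz
      rcases ZFSet.mem_pair.1 hz with h | h
      · exact ⟨_, _, _, h⟩
      · exact ⟨_, _, _, h⟩
    · intro a b w hw
      rcases ZFSet.mem_pair.1 hw with h | h
      · have := (ZFSet.pair_injective (ZFSet.pair_injective h).2).2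
        exact this ▸ hx
      · have := (ZFSet.pair_injective (ZFSet.pair_injective h).2).2
        exact this ▸ hy
  · exact Realizes.mem i i i i x (by simp [h0]) (by simp [h0]) (by simp [h1]) (by simp [h1])
      (ZFSet.mem_pair.2 (Or.inl rfl)) (refl_realized_s16 P p0 p1 inj pr i h0 h1 hi x hx)
  · exact Realizes.mem i i i i y (by simp [h0]) (by simp [h0]) (by simp [h1]) (by simp [h1])
      (ZFSet.mem_pair.2 (Or.inr rfl)) (refl_realized_s16 P p0 p1 inj pr i h0 h1 hi y hy)
end

section
/- The Union axiom is realized: let A be a pca. There exists an element e ∈ A such that for every x ∈ V(A) there exists y ∈ V(A) such that for every triple ⟨a,b,u⟩ ∈ x and every triple ⟨c,d,v⟩ ∈ u: (ea)c and (eb)d are defined and (ea)c = (eb)d ⊩ v ∈ y. -/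
universe u

inductive CTm (A : Type)
  | var : ℕ → CTm A
  | const : A → CTm A
  | ap : CTm A → CTm A → CTm A

namespace CTm
variable {A : Type}

def eval (P : PCA A) (ρ : ℕ → A) : CTm A → Part A
  | var n => Part.some (ρ n)
  | const a => Part.some a
  | ap t u => (eval P ρ t).bind fun x => (eval P ρ u).bind fun y => P.app x y

def lam (P : PCA A) (n : ℕ) : CTm A → CTm A
  | var m => if m = n then ap (ap (const P.s) (const P.k)) (const P.k)
      else ap (const P.k) (var m)
  | const a => ap (const P.k) (const a)
  | ap t u => ap (ap (const P.s) (lam P n t)) (lam P n u)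

theorem lam_spec (P : PCA A) (n : ℕ) (ρ : ℕ → A) (t : CTm A) :
    ∃ f, eval P ρ (lam P n t) = Part.some f ∧
      ∀ a, P.app f a = eval P (Function.update ρ n a) t := by
  have hk : ∀ b : A, ∃ f, P.app P.k b = Part.some f ∧ ∀ a, P.app f a = Part.some b := by
    intro b
    refine ⟨(P.app P.k b).get (P.k_def b), (Part.some_get _).symm, fun a => ?_⟩
    have h := P.k_spec b a
    rw [← Part.some_get (P.k_def b), Part.bind_some] at h
    exact h
  have hs : ∀ b c : A, ∃ f, ((P.app P.s b).bind fun x => P.app x c) = Part.some f ∧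
      ∀ a, P.app f a = (P.app b a).bind fun u => (P.app c a).bind fun v => P.app u v := by
    intro b c
    refine ⟨_, (Part.some_get (P.s_app_def b c)).symm, fun a => ?_⟩
    have h := P.s_spec b c a
    rw [← Part.some_get (P.s_app_def b c), Part.bind_some] at h
    exact h
  induction t with
  | var m =>
    by_cases hm : m = n
    · subst hm
      obtain ⟨f, hf, hf2⟩ := hs P.k P.k
      refine ⟨f, by simpa [lam, eval] using hf, fun a => ?_⟩
      obtain ⟨g, hg, hg2⟩ := hk a
      rw [hf2, hg]
      simp [eval, hg2]
    · obtain ⟨f, hf, hf2⟩ := hk (ρ m)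
      refine ⟨f, by simpa [lam, eval, hm] using hf, fun a => ?_⟩
      rw [hf2]; simp [eval, hm]
  | const b =>
    obtain ⟨f, hf, hf2⟩ := hk b
    exact ⟨f, by simpa [lam, eval] using hf, fun a => by rw [hf2]; simp [eval]⟩
  | ap t u iht ihu =>
    obtain ⟨f, hf, hf2⟩ := iht
    obtain ⟨g, hg, hg2⟩ := ihu
    obtain ⟨e, he, he2⟩ := hs f g
    exact ⟨e, by simpa [lam, eval, hf, hg] using he, fun a => by rw [he2, hf2, hg2]; simp [eval]⟩

/-- Two-variable abstraction. -/
theorem lam2 (P : PCA A) (t : CTm A) :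
    ∃ f, ∀ a, ∃ g, P.app f a = Part.some g ∧
      ∀ c, P.app g c =
        eval P (Function.update (Function.update (fun _ => P.k) 0 a) 1 c) t := by
  obtain ⟨f, -, hf⟩ := lam_spec P 0 (fun _ => P.k) (lam P 1 t)
  refine ⟨f, fun a => ?_⟩
  obtain ⟨g, hg, hg2⟩ := lam_spec P 1 (Function.update (fun _ => P.k) 0 a) t
  exact ⟨g, by rw [hf, hg], hg2⟩

end CTm

/-- **The Union axiom is realized**: there is `e ∈ A` such that for every
`x ∈ V(A)` there is `y ∈ V(A)` such that for all `⟨a,b,u⟩ ∈ x` and all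
`⟨c,d,v⟩ ∈ u`, `(ea)c` and `(eb)d` are defined and `(ea)c = (eb)d ⊩ v ∈ y`. -/
theorem union_realized {A : Type} (P : PCA A)
    (p p0 p1 : A)
    (hp : ∀ a b : A, (P.apl (P.app p a) b).Dom)
    (hp0 : ∀ a b : A, ((P.apl (P.app p a) b).bind fun w => P.app p0 w) = Part.some a)
    (hp1 : ∀ a b : A, ((P.apl (P.app p a) b).bind fun w => P.app p1 w) = Part.some b)
    (inj : A → ZFSet) (hinj : Function.Injective inj)
    :
    ∃ e : A, ∀ x : ZFSet, IsName inj x →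
      ∃ y : ZFSet, IsName inj y ∧
        ∀ (a b : A) (u : ZFSet), TripleName inj a b u ∈ x →
          ∀ (c d : A) (v : ZFSet), TripleName inj c d v ∈ u →
            ∃ r s : A, r ∈ P.apl (P.app e a) c ∧ s ∈ P.apl (P.app e b) d ∧
              RealMem P p0 p1 inj r s v y := by
  obtain ⟨pr, hpr, h0, h1⟩ : ∃ pr : A → A → A,
      (∀ a b, ((P.app p a).bind fun x => P.app x b) = Part.some (pr a b)) ∧
      (∀ a b, P.app p0 (pr a b) = Part.some a) ∧
      (∀ a b, P.app p1 (pr a b) = Part.some b) := by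
    refine ⟨fun a b => (P.apl (P.app p a) b).get (hp a b),
      fun a b => (Part.some_get (hp a b)).symm, fun a b => ?_, fun a b => ?_⟩
    · have h := hp0 a b
      rw [← Part.some_get (hp a b), Part.bind_some] at h
      exact h
    · have h := hp1 a b
      rw [← Part.some_get (hp a b), Part.bind_some] at h
      exact h
  obtain ⟨i, hi⟩ : ∃ i, ∀ c, P.app i c = Part.some (pr (pr c i) (pr c i)) := by
    let q : CTm A := .ap (.ap (.const p) (.var 1)) (.ap (.var 0) (.var 0))
    obtain ⟨w, hw⟩ := CTm.lam2 P (.ap (.ap (.const p) q) q)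
    obtain ⟨i, hwi, hi⟩ := hw w
    refine ⟨i, fun c => ?_⟩
    rw [hi]
    simp [q, CTm.eval, hwi, hpr]
  obtain ⟨e, he⟩ := CTm.lam2 P (.ap (.ap (.const p) (.var 1)) (.const i))
  have he' : ∀ a c, P.apl (P.app e a) c = Part.some (pr c i) := by
    intro a c
    obtain ⟨g, hg, hg2⟩ := he a
    rw [PCA.apl, hg, Part.bind_some, hg2]
    simp [CTm.eval, hpr]
  have hrefl : ∀ v, IsName inj v → Realizes P p0 p1 inj false i i v v := by
    intro v hv
    induction hv with
    | mk v _ _ ih =>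
      have key : ∀ c d z, TripleName inj c d z ∈ v →
          Realizes P p0 p1 inj true (pr c i) (pr d i) z v := fun c d z hz =>
        Realizes.mem c d i i z (by simp [h0]) (by simp [h0]) (by simp [h1]) (by simp [h1]) hz
          (ih c d z hz)
      refine Realizes.eq ?_ ?_ ?_ ?_
      · intro c d z _
        exact ⟨_, _, pr c i, pr d i, by rw [hi]; exact Part.mem_some _,
          by rw [hi]; exact Part.mem_some _, by simp [h0], by simp [h0]⟩
      · intro c d z a b a' b' hz ha hb ha' hb'
        rw [hi, Part.mem_some_iff] at ha hb
        subst ha hb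
        rw [h0, Part.mem_some_iff] at ha' hb'
        subst ha' hb'
        exact key c d z hz
      · intro c d z _
        exact ⟨_, _, pr c i, pr d i, by rw [hi]; exact Part.mem_some _,
          by rw [hi]; exact Part.mem_some _, by simp [h1], by simp [h1]⟩
      · intro c d z a b a' b' hz ha hb ha' hb'
        rw [hi, Part.mem_some_iff] at ha hb
        subst ha hb
        rw [h1, Part.mem_some_iff] at ha' hb'
        subst ha' hb'
        exact key c d z hz
  have hsub : ∀ x, IsName inj x → ∀ a b y, TripleName inj a b y ∈ x → IsName inj y := by
    intro x hx
    cases hx with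
    | mk _ _ h => exact h
  have htr : ∀ x, IsName inj x → ∀ z ∈ x, ∃ a b y, z = TripleName inj a b y := by
    intro x hx
    cases hx with
    | mk _ h _ => exact h
  have hpair : ∀ a b s : ZFSet, ZFSet.pair a b ∈ s → b ∈ ZFSet.sUnion (ZFSet.sUnion s) := by
    intro a b s h
    refine ZFSet.mem_sUnion.2 ⟨{a, b}, ZFSet.mem_sUnion.2 ⟨_, h, ?_⟩, ?_⟩ <;>
      simp [ZFSet.pair]
  refine ⟨e, fun x hx => ?_⟩
  let U := ZFSet.sUnion (ZFSet.sUnion (ZFSet.sUnion (ZFSet.sUnion (ZFSet.sUnion x))))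
  let y := ZFSet.sep (fun t => ∃ a b u, TripleName inj a b u ∈ x ∧ t ∈ u) U
  refine ⟨y, IsName.mk y ?_ ?_, ?_⟩
  · intro z hz
    obtain ⟨_, a, b, u, hu, hzu⟩ := ZFSet.mem_sep.1 hz
    exact htr u (hsub x hx _ _ _ hu) z hzu
  · intro c d v hz
    obtain ⟨_, a, b, u, hu, hzu⟩ := ZFSet.mem_sep.1 hz
    exact hsub u (hsub x hx _ _ _ hu) _ _ _ hzu
  · intro a b u hu c d v hv
    refine ⟨pr c i, pr d i, by simp [he'], by simp [he'], ?_⟩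
    refine Realizes.mem c d i i v (by simp [h0]) (by simp [h0]) (by simp [h1]) (by simp [h1]) ?_
      (hrefl v (hsub u (hsub x hx _ _ _ hu) _ _ _ hv))
    exact ZFSet.mem_sep.2 ⟨ZFSet.mem_sUnion.2 ⟨u, hpair _ _ _ (hpair _ _ _ hu), hv⟩,
      a, b, u, hu, hv⟩
end

section
/- Set induction is realized: let A be a pca. There exists an element e ∈ A such that for every assignment Φ of a set Φ(x) ⊆ A × A to each x ∈ V(A), and all a, b ∈ A, if for every x ∈ V(A) and all c, d ∈ A the following holds — whenever for every triple ⟨g,h,y⟩ ∈ x the applications cg and dh are defined with (cg, dh) ∈ Φ(y), then ac and bd are defined with (ac, bd) ∈ Φ(x) — then for every x ∈ V(A), ea and eb are defined and (ea, eb) ∈ Φ(x). -/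
universe u

theorem PCA.exists_rec {A : Type} (P : PCA A) :
    ∃ (e : A) (t : A → A), (∀ a, P.app e a = P.app a (t a)) ∧
      ∀ a g, P.app (t a) g = P.app e a := by
  have hK : ∀ a, ∃ x, P.app P.k a = Part.some x := fun a =>
    ⟨_, (Part.some_get (P.k_def a)).symm⟩
  have hS : ∀ a, ∃ x, P.app P.s a = Part.some x := fun a =>
    ⟨_, (Part.some_get (P.s_def a)).symm⟩
  choose K hK using hK
  choose S1 hS using hS
  have hS2 : ∀ a b, ∃ x, P.app (S1 a) b = Part.some x := fun a b => by
    have h := P.s_app_def a b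
    rw [hS, Part.bind_some] at h
    exact ⟨_, (Part.some_get h).symm⟩
  choose S hS2 using hS2
  have hk : ∀ a b, P.app (K a) b = Part.some a := fun a b => by
    have h := P.k_spec a b
    rwa [hK, Part.bind_some] at h
  have hs : ∀ a b c, P.app (S a b) c =
      (P.app a c).bind fun u => (P.app b c).bind fun v => P.app u v := fun a b c => by
    have h := P.s_spec a b c
    rwa [hS, Part.bind_some, hS2, Part.bind_some] at h
  obtain ⟨i, hi⟩ : ∃ i, ∀ a, P.app i a = Part.some a :=
    ⟨S P.k P.k, fun a => by simp [hs, hK, hk]⟩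
  obtain ⟨w, hw⟩ : ∃ w, ∀ x, P.app w x =
      Part.some (S i (S (K (S1 (S (K x) (K x)))) P.k)) := by
    refine ⟨S (K (S1 i)) (S (S (K P.s) (S (K P.k) (S (K P.s)
      (S (S (K P.s) P.k) P.k)))) (K P.k)), fun x => ?_⟩
    simp [hs, hK, hk, hS, hS2]
  refine ⟨S i (S (K (S1 (S (K w) (K w)))) P.k), fun a => S (S (K w) (K w)) (K a), ?_, ?_⟩
  · intro a
    simp [hs, hK, hk, hS2, hi]
  · intro a g
    rw [hs (S (K w) (K w)), hs (K w)]
    simp only [hk, hw, Part.bind_some]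

/-- **Set induction is realized**: there is `e ∈ A` such that for every
abstract realizability assignment `Φ` (assigning to each name the set of pairs
of realizers of `φ` at that name) and all `a, b ∈ A`: if `a = b` realizes the
premise `∀x (∀y ∈ x φ(y) → φ(x))`, then for every `x ∈ V(A)`, `ea` and `eb`
are defined and `(ea, eb) ∈ Φ(x)`. -/
theorem set_induction_realized {A : Type} (P : PCA A)
    (inj : A → ZFSet) (hinj : Function.Injective inj) :
    ∃ e : A, ∀ (Φ : ZFSet → Set (A × A)) (a b : A),
      (∀ x : ZFSet, IsName inj x → ∀ c d : A,
        (∀ (g h : A) (y : ZFSet), TripleName inj g h y ∈ x →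
          ∃ cg dh : A, cg ∈ P.app c g ∧ dh ∈ P.app d h ∧ (cg, dh) ∈ Φ y) →
        ∃ ac bd : A, ac ∈ P.app a c ∧ bd ∈ P.app b d ∧ (ac, bd) ∈ Φ x) →
      ∀ x : ZFSet, IsName inj x →
        ∃ u v : A, u ∈ P.app e a ∧ v ∈ P.app e b ∧ (u, v) ∈ Φ x := by
  obtain ⟨e, t, he, ht⟩ := P.exists_rec
  refine ⟨e, fun Φ a b H x hx => ?_⟩
  induction hx with
  | mk x h1 h2 ih =>
    rw [he a, he b]
    refine H x (IsName.mk x h1 h2) (t a) (t b) fun g h y hy => ?_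
    rw [ht, ht]
    exact ih g h y hy
end

section
/- The Powerset axiom is realized (in a classical/ZFC background, as in IZF): let A be a pca. There exists an element e ∈ A such that for every x ∈ V(A) there exists y ∈ V(A) such that for all z ∈ V(A) and all a, b ∈ A: if for every triple ⟨c,d,u⟩ ∈ z the applications ac and bd are defined and ac = bd ⊩ u ∈ x (i.e., a = b realizes z ⊆ x), then ea and eb are defined and ea = eb ⊩ z ∈ y. -/
universe u

theorem pca_combs {A : Type} (P : PCA A) :
    ∃ (K S1 : A → A) (S : A → A → A),
      (∀ a, K a ∈ P.app P.k a) ∧ (∀ a b, a ∈ P.app (K a) b) ∧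
      (∀ a, S1 a ∈ P.app P.s a) ∧ (∀ a b, S a b ∈ P.app (S1 a) b) ∧
      (∀ a b c u v w, u ∈ P.app a c → v ∈ P.app b c → w ∈ P.app u v →
        w ∈ P.app (S a b) c) := by
  have hk : ∀ a, ∃ x, x ∈ P.app P.k a := fun a => ⟨_, Part.get_mem (P.k_def a)⟩
  have hs1 : ∀ a, ∃ x, x ∈ P.app P.s a := fun a => ⟨_, Part.get_mem (P.s_def a)⟩
  choose K hK using hk
  choose S1 hS1 using hs1
  have hs : ∀ a b, ∃ x, x ∈ P.app (S1 a) b := by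
    intro a b
    have h := Part.get_mem (P.s_app_def a b)
    obtain ⟨x, hx, hy⟩ := Part.mem_bind_iff.1 h
    rw [Part.mem_unique hx (hS1 a)] at hy
    exact ⟨_, hy⟩
  choose S hS using hs
  refine ⟨K, S1, S, hK, ?_, hS1, hS, ?_⟩
  · intro a b
    have h : a ∈ (P.app P.k a).bind fun x => P.app x b := by
      rw [P.k_spec]; exact Part.mem_some a
    obtain ⟨x, hx, hy⟩ := Part.mem_bind_iff.1 h
    rwa [Part.mem_unique hx (hK a)] at hy
  · intro a b c u v w hu hv hw
    have h : w ∈ (((P.app P.s a).bind fun x => P.app x b).bind fun x => P.app x c) := by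
      rw [P.s_spec]
      exact Part.mem_bind_iff.2 ⟨u, hu, Part.mem_bind_iff.2 ⟨v, hv, hw⟩⟩
    obtain ⟨x, hx, hy⟩ := Part.mem_bind_iff.1 h
    obtain ⟨x', hx', hy'⟩ := Part.mem_bind_iff.1 hx
    rw [Part.mem_unique hx' (hS1 a)] at hy'
    rwa [Part.mem_unique hy' (hS a b)] at hy

theorem refl_comb {A : Type} (P : PCA A) (p : A) (Q1 : A → A) (Q : A → A → A)
    (hQ1 : ∀ a, Q1 a ∈ P.app p a) (hQ : ∀ a b, Q a b ∈ P.app (Q1 a) b) :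
    ∃ i : A, ∀ c, Q (Q c i) (Q c i) ∈ P.app i c := by
  obtain ⟨K, S1, S, hK, hK2, hS1, hS, hS2⟩ := pca_combs P
  have hI : ∀ a, a ∈ P.app (S P.k P.k) a := fun a =>
    hS2 _ _ _ _ _ _ (hK a) (hK a) (hK2 _ _)
  have hE : ∀ t, Q t t ∈ P.app (S p (S P.k P.k)) t := fun t =>
    hS2 _ _ _ _ _ _ (hQ1 t) (hI t) (hQ _ _)
  have hM : ∀ g, S (K g) (K g) ∈ P.app (S (S (K P.s) P.k) P.k) g := fun g =>
    hS2 _ _ _ _ _ _ (hS2 _ _ _ _ _ _ (hK2 _ _) (hK g) (hS1 _)) (hK g) (hS _ _)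
  obtain ⟨M, hM⟩ : ∃ M, ∀ g, S (K g) (K g) ∈ P.app M g := ⟨_, hM⟩
  obtain ⟨E, hE⟩ : ∃ E, ∀ t, Q t t ∈ P.app E t := ⟨_, hE⟩
  have hN : ∀ g, S p (S (K g) (K g)) ∈ P.app (S (K (S1 p)) M) g := fun g =>
    hS2 _ _ _ _ _ _ (hK2 _ _) (hM g) (hS _ _)
  obtain ⟨N, hN⟩ : ∃ N, ∀ g, S p (S (K g) (K g)) ∈ P.app N g := ⟨_, hN⟩
  have hF : ∀ g, S (K E) (S p (S (K g) (K g))) ∈ P.app (S (K (S1 (K E))) N) g := fun g =>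
    hS2 _ _ _ _ _ _ (hK2 _ _) (hN g) (hS _ _)
  obtain ⟨F, hF⟩ : ∃ F, ∀ g, S (K E) (S p (S (K g) (K g))) ∈ P.app F g := ⟨_, hF⟩
  refine ⟨S (K E) (S p (S (K F) (K F))), fun c => ?_⟩
  refine hS2 _ _ _ _ _ _ (hK2 _ _) (hS2 _ _ _ _ _ _ (hQ1 c) ?_ (hQ _ _)) (hE _)
  exact hS2 _ _ _ _ _ _ (hK2 _ _) (hK2 _ _) (hF F)

theorem refl_real {A : Type} (P : PCA A) (p0 p1 : A) (inj : A → ZFSet) (Q : A → A → A)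
    (hQ0 : ∀ a b, a ∈ P.app p0 (Q a b)) (hQ1 : ∀ a b, b ∈ P.app p1 (Q a b))
    (i : A) (hi : ∀ c, Q (Q c i) (Q c i) ∈ P.app i c) (z : ZFSet) (hz : IsName inj z) :
    Realizes P p0 p1 inj false i i z z := by
  induction hz with
  | mk x h1 h2 ih =>
    have key : ∀ c d y, TripleName inj c d y ∈ x →
        Realizes P p0 p1 inj true (Q c i) (Q d i) y x := fun c d y h =>
      Realizes.mem c d i i y (hQ0 _ _) (hQ0 _ _) (hQ1 _ _) (hQ1 _ _) h (ih c d y h)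
    refine Realizes.eq ?_ ?_ ?_ ?_
    · intro c d y h
      exact ⟨_, _, _, _, hi c, hi d, hQ0 _ _, hQ0 _ _⟩
    · intro c d y u v u0 v0 h hu hv hu0 hv0
      rw [Part.mem_unique hu (hi c)] at hu0
      rw [Part.mem_unique hv (hi d)] at hv0
      rw [Part.mem_unique hu0 (hQ0 _ _), Part.mem_unique hv0 (hQ0 _ _)]
      exact key c d y h
    · intro c d y h
      exact ⟨_, _, _, _, hi c, hi d, hQ1 _ _, hQ1 _ _⟩
    · intro c d y u v u0 v0 h hu hv hu0 hv0
      rw [Part.mem_unique hu (hi c)] at hu0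
      rw [Part.mem_unique hv (hi d)] at hv0
      rw [Part.mem_unique hu0 (hQ1 _ _), Part.mem_unique hv0 (hQ1 _ _)]
      exact key c d y h

theorem triple_set {A : Type} (inj : A → ZFSet) (U : ZFSet) :
    ∃ T : ZFSet, ∀ a b, ∀ y ∈ U, TripleName inj a b y ∈ T := by
  refine ⟨ZFSet.prod (ZFSet.range inj) (ZFSet.prod (ZFSet.range inj) U), ?_⟩
  intro a b y hy
  simp [TripleName, hy]

theorem bound_step {A : Type} (P : PCA A) (p0 p1 : A) (inj : A → ZFSet) (x : ZFSet)
    (h : ∀ c d v, TripleName inj c d v ∈ x → ∃ S : ZFSet, ∀ u, IsName inj u → ∀ a b,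
      Realizes P p0 p1 inj false a b u v → u ∈ S) :
    ∃ S : ZFSet, ∀ z, IsName inj z →
      (∀ c d u, TripleName inj c d u ∈ z → ∃ a b, Realizes P p0 p1 inj true a b u x) →
      z ∈ S := by
  have h' : ∀ t : {t : ZFSet // t ∈ x}, ∃ S : ZFSet, ∀ c d v, (t : ZFSet) = TripleName inj c d v →
      ∀ u, IsName inj u → ∀ a b, Realizes P p0 p1 inj false a b u v → u ∈ S := by
    rintro ⟨t, ht⟩
    by_cases hc : ∃ c d v, t = TripleName inj c d v
    · obtain ⟨c, d, v, rfl⟩ := hc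
      obtain ⟨S, hS⟩ := h c d v ht
      refine ⟨S, ?_⟩
      intro c' d' v' he u hu a b hr
      have e1 := ZFSet.pair_injective he
      have : v = v' := (ZFSet.pair_injective (ZFSet.pair_injective he).2).2
      subst this
      exact hS u hu a b hr
    · exact ⟨∅, fun c d v he => (hc ⟨c, d, v, he⟩).elim⟩
  choose f hf using h'
  obtain ⟨T, hT⟩ := triple_set inj (ZFSet.sUnion (ZFSet.range f))
  refine ⟨ZFSet.powerset T, ?_⟩
  intro z hz hr
  obtain ⟨_, hz1, hz2⟩ := hz
  rw [ZFSet.mem_powerset]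
  intro t ht
  obtain ⟨c, d, u, rfl⟩ := hz1 t ht
  apply hT
  obtain ⟨a, b, hab⟩ := hr c d u ht
  cases hab with
  | mem a0 b0 a1 b1 v ha0 hb0 ha1 hb1 hv he =>
    rw [ZFSet.mem_sUnion]
    exact ⟨f ⟨TripleName inj a0 b0 v, hv⟩, by simp,
      hf _ a0 b0 v rfl u (hz2 _ _ _ ht) _ _ he⟩

theorem bound_eq {A : Type} (P : PCA A) (p0 p1 : A) (inj : A → ZFSet) (v : ZFSet)
    (hv : IsName inj v) : ∃ S : ZFSet, ∀ u, IsName inj u → ∀ a b,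
      Realizes P p0 p1 inj false a b u v → u ∈ S := by
  induction hv with
  | mk x h1 h2 ih =>
    obtain ⟨S, hS⟩ := bound_step P p0 p1 inj x ih
    refine ⟨S, fun u hu a b hr => hS u hu ?_⟩
    intro c d w hw
    cases hr with
    | eq h1def h1 h2def h2 =>
      obtain ⟨r, r', r0, r0', q1, q2, q3, q4⟩ := h1def c d w hw
      exact ⟨_, _, h1 c d w _ _ _ _ hw q1 q2 q3 q4⟩

/-- **The Powerset axiom is realized** (in a classical background, as for IZF):
there is `e ∈ A` such that for every `x ∈ V(A)` there is `y ∈ V(A)` such that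
for all `z ∈ V(A)` and `a, b ∈ A`, if `a = b` realizes `z ⊆ x` (i.e. for every
`⟨c,d,u⟩ ∈ z`, `ac` and `bd` are defined and `ac = bd ⊩ u ∈ x`), then `ea` and
`eb` are defined and `ea = eb ⊩ z ∈ y`. -/
theorem powerset_realized {A : Type} (P : PCA A)
    (p p0 p1 : A)
    (hp : ∀ a b : A, (P.apl (P.app p a) b).Dom)
    (hp0 : ∀ a b : A, ((P.apl (P.app p a) b).bind fun w => P.app p0 w) = Part.some a)
    (hp1 : ∀ a b : A, ((P.apl (P.app p a) b).bind fun w => P.app p1 w) = Part.some b)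
    (inj : A → ZFSet) (hinj : Function.Injective inj)
    :
    ∃ e : A, ∀ x : ZFSet, IsName inj x →
      ∃ y : ZFSet, IsName inj y ∧
        ∀ z : ZFSet, IsName inj z → ∀ a b : A,
          (∀ (c d : A) (u : ZFSet), TripleName inj c d u ∈ z →
            ∃ ac bd : A, ac ∈ P.app a c ∧ bd ∈ P.app b d ∧
              RealMem P p0 p1 inj ac bd u x) →
          ∃ ea eb : A, ea ∈ P.app e a ∧ eb ∈ P.app e b ∧
            RealMem P p0 p1 inj ea eb z y := by
  have hq1 : ∀ a, ∃ q, q ∈ P.app p a := by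
    intro a
    obtain ⟨x, hx, _⟩ := Part.mem_bind_iff.1 (Part.get_mem (hp a a))
    exact ⟨x, hx⟩
  choose Q1 hQ1 using hq1
  have hq : ∀ a b, ∃ q, q ∈ P.app (Q1 a) b := by
    intro a b
    obtain ⟨x, hx, hy⟩ := Part.mem_bind_iff.1 (Part.get_mem (hp a b))
    rw [Part.mem_unique hx (hQ1 a)] at hy
    exact ⟨_, hy⟩
  choose Q hQ using hq
  have hpr : ∀ a b w, w ∈ P.apl (P.app p a) b → w = Q a b := fun a b w hw =>
    Part.mem_unique hw (Part.mem_bind_iff.2 ⟨_, hQ1 a, hQ a b⟩)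
  have hQ0 : ∀ a b, a ∈ P.app p0 (Q a b) := by
    intro a b
    have h := Part.mem_some a
    rw [← hp0 a b] at h
    obtain ⟨w, hw, hy⟩ := Part.mem_bind_iff.1 h
    rwa [hpr a b w hw] at hy
  have hQ1' : ∀ a b, b ∈ P.app p1 (Q a b) := by
    intro a b
    have h := Part.mem_some b
    rw [← hp1 a b] at h
    obtain ⟨w, hw, hy⟩ := Part.mem_bind_iff.1 h
    rwa [hpr a b w hw] at hy
  obtain ⟨i, hi⟩ := refl_comb P p Q1 Q hQ1 hQ
  obtain ⟨K, S1, S, hK, hK2, hS1, hS, hS2⟩ := pca_combs P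
  refine ⟨K (Q i i), fun x hx => ?_⟩
  obtain ⟨B, hB⟩ := bound_step P p0 p1 inj x (by
    intro c d v hv
    obtain ⟨_, _, hn⟩ := hx
    exact bound_eq P p0 p1 inj v (hn c d v hv))
  obtain ⟨T, hT⟩ := triple_set inj B
  refine ⟨ZFSet.sep (fun t => ∃ z, IsName inj z ∧ t = TripleName inj i i z) T, ?_, ?_⟩
  · refine IsName.mk _ ?_ ?_
    · intro t ht
      obtain ⟨_, z, _, h⟩ := ZFSet.mem_sep.1 ht
      exact ⟨i, i, z, h⟩
    · intro a b y' ht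
      obtain ⟨_, z, hz, h⟩ := ZFSet.mem_sep.1 ht
      have : y' = z := (ZFSet.pair_injective (ZFSet.pair_injective h).2).2
      rwa [this]
  · intro z hz a b hab
    refine ⟨Q i i, Q i i, hK2 _ _, hK2 _ _, ?_⟩
    have hzB : z ∈ B := hB z hz (fun c d u hu => by
      obtain ⟨ac, bd, _, _, h⟩ := hab c d u hu
      exact ⟨ac, bd, h⟩)
    exact Realizes.mem i i i i z (hQ0 _ _) (hQ0 _ _) (hQ1' _ _) (hQ1' _ _)
      (ZFSet.mem_sep.2 ⟨hT i i z hzB, z, hz, rfl⟩)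
      (refl_real P p0 p1 inj Q hQ0 hQ1' i hi z hz)
end
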